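/- Let x ∈ (0,1) be an irrational number and let n be a positive integer. If k = k(x,n) is the unique positive integer such that q_k(x) + q_{k−1}(x) ≤ n + 1 < q_{k+1}(x) + q_k(x), then the Lochs index from the Farey to the continued fraction sequence of partitions satisfies L_n(x, ℱ, 𝒞ℱ) = k; that is, k is the largest ℓ ∈ ℕ such that I_n^ℱ(x) ⊆ I_ℓ^{𝒞ℱ}(x). -/

import Mathlib

open MeasureTheory Filter Set

noncomputable section

/-- The set `E_n^ℱ` of endpoints of the Farey partition `F_n`: rationals of `[0,1]` whose
denominator in lowest terms is at most `n+1`. -/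
def fareyPts (n : ℕ) : Set ℝ :=
  {x | ∃ p q : ℕ, q ≠ 0 ∧ q ≤ n + 1 ∧ p ≤ q ∧ Nat.gcd p q = 1 ∧ x = (p : ℝ) / q}

/-- The interval `I_n^ℱ(x)` of the Farey partition `F_n` containing `x`: the open interval
between the largest Farey point of order `n+1` below `x` and the smallest one above `x`. -/
def fareyInterval (n : ℕ) (x : ℝ) : Set ℝ :=
  Set.Ioo (sSup (fareyPts n ∩ Set.Iio x)) (sInf (fareyPts n ∩ Set.Ioi x))

/-- The partial quotient `a_{m+1}` of the continued fraction expansion of `x ∈ (0,1)`,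
obtained from the Gauss map: `cfa x m = ⌊1 / T_G^m x⌋` where `T_G y = {1/y}`. -/
def cfa (x : ℝ) (m : ℕ) : ℕ := ⌊1 / ((fun y => Int.fract (1 / y))^[m] x)⌋₊

/-- Numerators of the convergents of `x`, shifted by one: `cfp x (m+1) = p_m`, with
`p_{-1} = 1`, `p_0 = 0`, `p_{m+1} = a_{m+1} p_m + p_{m-1}`. -/
def cfp (x : ℝ) : ℕ → ℕ
  | 0 => 1
  | 1 => 0
  | m + 2 => cfa x m * cfp x (m + 1) + cfp x m

/-- Denominators of the convergents of `x`, shifted by one: `cfq x (m+1) = q_m`, with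
`q_{-1} = 0`, `q_0 = 1`, `q_{m+1} = a_{m+1} q_m + q_{m-1}`. -/
def cfq (x : ℝ) : ℕ → ℕ
  | 0 => 0
  | 1 => 1
  | m + 2 => cfa x m * cfq x (m + 1) + cfq x m

/-- The fundamental interval `I_n^{𝒞ℱ}(x)` of depth `n` of the continued fraction
expansion: the open interval with endpoints `p_n/q_n` and `(p_n+p_{n-1})/(q_n+q_{n-1})`,
the former being the left endpoint iff `n` is even. -/
def cfInterval (x : ℝ) (n : ℕ) : Set ℝ :=
  if Even n then
    Set.Ioo ((cfp x (n + 1) : ℝ) / (cfq x (n + 1) : ℝ))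
      (((cfp x (n + 1) + cfp x n : ℕ) : ℝ) / ((cfq x (n + 1) + cfq x n : ℕ) : ℝ))
  else
    Set.Ioo (((cfp x (n + 1) + cfp x n : ℕ) : ℝ) / ((cfq x (n + 1) + cfq x n : ℕ) : ℝ))
      ((cfp x (n + 1) : ℝ) / (cfq x (n + 1) : ℝ))

/-- The Lochs index `L_n(x, 𝒞ℱ, ℱ)` from the continued fraction sequence of partitions to
the Farey sequence of partitions. -/
def lochsCFtoF (x : ℝ) (n : ℕ) : ℕ :=
  sSup {ℓ : ℕ | cfInterval x n ⊆ fareyInterval ℓ x}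

/-- The Lochs index `L_n(x, ℱ, 𝒞ℱ)` from the Farey sequence of partitions to the
continued fraction sequence of partitions. -/
def lochsFtoCF (x : ℝ) (n : ℕ) : ℕ :=
  sSup {ℓ : ℕ | fareyInterval n x ⊆ cfInterval x ℓ}

/-!
Let `t ∈ (0, 1)` be the `ℓ`-th iterate of `x` under the Gauss map. Then
`x = (p_ℓ + t p_{ℓ-1}) / (q_ℓ + t q_{ℓ-1})`, an expression that moves monotonically from
`p_ℓ / q_ℓ` through the mediant `(p_ℓ + p_{ℓ-1}) / (q_ℓ + q_{ℓ-1})` towards `p_{ℓ-1} / q_{ℓ-1}` as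
`t` runs through `0`, `1`, `∞`. Since these two convergents have determinant `± 1`, every fraction
strictly between them has denominator at least `q_ℓ + q_{ℓ-1}`. If this sum exceeds `n + 1`, the
Farey interval of `x` therefore contains the whole gap between the convergents, in particular the
mediant, which is an endpoint of the continued fraction interval; otherwise both endpoints of the
latter are Farey points. So the Farey interval is contained in the continued fraction interval of
depth `ℓ` if and only if `q_ℓ + q_{ℓ-1} ≤ n + 1`, and these sums increase with `ℓ`.
-/

section Mediant

variable {K : Type*} [Field K] [LinearOrder K] [IsStrictOrderedRing K]

section

variable {a b c d : K}

lemma strictMonoOn_weighted_mediant (hb : 0 < b) (hd : 0 ≤ d) (h : a * d < c * b) :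
    StrictMonoOn (fun t ↦ (a + t * c) / (b + t * d)) (Ici 0) := by
  intro s (hs : 0 ≤ s) t (ht : 0 ≤ t) hst
  have hgap : 0 < (t - s) * (c * b - a * d) := mul_pos (sub_pos.2 hst) (sub_pos.2 h)
  refine (div_lt_div_iff₀ (by positivity) (by positivity)).2 ?_
  linear_combination hgap

lemma strictAntiOn_weighted_mediant (hb : 0 < b) (hd : 0 ≤ d) (h : c * b < a * d) :
    StrictAntiOn (fun t ↦ (a + t * c) / (b + t * d)) (Ici 0) := by
  intro s (hs : 0 ≤ s) t (ht : 0 ≤ t) hst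
  have hgap : 0 < (t - s) * (a * d - c * b) := mul_pos (sub_pos.2 hst) (sub_pos.2 h)
  refine (div_lt_div_iff₀ (by positivity) (by positivity)).2 ?_
  linear_combination hgap

lemma mediant_mem_Ioo (hb : 0 < b) (hd : 0 < d) (h : a / b < c / d) :
    (a + c) / (b + d) ∈ Ioo (a / b) (c / d) := by
  rw [div_lt_div_iff₀ hb hd] at h
  constructor
  · rw [div_lt_div_iff₀ hb (by positivity)]
    linarith
  · rw [div_lt_div_iff₀ (by positivity) hd]
    linarith

end

lemma add_le_of_div_mem_Ioo {a b c d p q : ℕ} (hb : 0 < b) (hd : 0 < d) (hq : 0 < q)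
    (hdet : a * d + 1 = c * b) (h : (p / q : K) ∈ Ioo (a / b : K) (c / d)) : b + d ≤ q := by
  have hleft : a * q + 1 ≤ p * b := by
    exact_mod_cast (div_lt_div_iff₀ (Nat.cast_pos.2 hb) (Nat.cast_pos.2 hq)).1 h.1
  have hright : p * d + 1 ≤ c * q := by
    exact_mod_cast (div_lt_div_iff₀ (Nat.cast_pos.2 hq) (Nat.cast_pos.2 hd)).1 h.2
  zify at hdet hleft hright ⊢
  calc (b + d : ℤ) = b * 1 + d * 1 := by ring
    _ ≤ b * (c * q - p * d) + d * (p * b - a * q) := by gcongr <;> linarith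
    _ = q := by linear_combination (-q : ℤ) * hdet

end Mediant

section Farey

variable {n : ℕ} {x : ℝ}

lemma div_mem_fareyPts {p q : ℕ} (hq : 0 < q) (hqn : q ≤ n + 1) (hpq : p ≤ q) :
    (p / q : ℝ) ∈ fareyPts n := by
  have hg : 0 < p.gcd q := Nat.gcd_pos_of_pos_right p hq
  refine ⟨p / p.gcd q, q / p.gcd q, (Nat.div_pos (Nat.gcd_le_right p hq) hg).ne',
    (Nat.div_le_self _ _).trans hqn, Nat.div_le_div_right hpq, Nat.coprime_div_gcd_div_gcd hg, ?_⟩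
  rw [Nat.cast_div_div_div_cancel_right (Nat.gcd_dvd_right p q) (Nat.gcd_dvd_left p q)]

lemma fareyInterval_subset_Ioo {c d : ℝ} (hc : c ∈ fareyPts n) (hd : d ∈ fareyPts n)
    (hx : x ∈ Ioo c d) : fareyInterval n x ⊆ Ioo c d :=
  Ioo_subset_Ioo (le_csSup ⟨x, fun _ hy ↦ hy.2.le⟩ ⟨hc, hx.1⟩)
    (csInf_le ⟨x, fun _ hy ↦ hy.2.le⟩ ⟨hd, hx.2⟩)

variable {a b c d : ℕ}

lemma Ioo_subset_fareyInterval (hb : 0 < b) (hd : 0 < d) (hdet : a * d + 1 = c * b)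
    (hn : n + 1 < b + d) (hx : x ∈ Ioo 0 1) (hxI : x ∈ Ioo (a / b : ℝ) (c / d)) :
    Ioo (a / b : ℝ) (c / d) ⊆ fareyInterval n x := by
  have hgap : ∀ y ∈ fareyPts n, y ∉ Ioo (a / b : ℝ) (c / d) := by
    rintro _ ⟨p, q, hq, hqn, -, -, rfl⟩ hy
    have := add_le_of_div_mem_Ioo hb hd (Nat.pos_of_ne_zero hq) hdet hy
    omega
  have zero_mem : (0 : ℝ) ∈ fareyPts n := by
    simpa using div_mem_fareyPts (n := n) (p := 0) one_pos (by omega) zero_le_one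
  have one_mem : (1 : ℝ) ∈ fareyPts n := by
    simpa using div_mem_fareyPts (n := n) (p := 1) one_pos (by omega) le_rfl
  exact Ioo_subset_Ioo
    (csSup_le ⟨0, zero_mem, hx.1⟩ fun y ⟨hy, hyx⟩ ↦
      not_lt.1 fun hay ↦ hgap y hy ⟨hay, hyx.trans hxI.2⟩)
    (le_csInf ⟨1, one_mem, hx.2⟩ fun y ⟨hy, hxy⟩ ↦
      not_lt.1 fun hyc ↦ hgap y hy ⟨hxI.1.trans hxy, hyc⟩)

lemma mediant_mem_fareyInterval (hb : 0 < b) (hd : 0 < d) (hdet : a * d + 1 = c * b)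
    (hn : n + 1 < b + d) (hx : x ∈ Ioo 0 1) (hxI : x ∈ Ioo (a / b : ℝ) (c / d)) :
    ((a + c : ℕ) / (b + d : ℕ) : ℝ) ∈ fareyInterval n x := by
  push_cast
  exact Ioo_subset_fareyInterval hb hd hdet hn hx hxI
    (mediant_mem_Ioo (Nat.cast_pos.2 hb) (Nat.cast_pos.2 hd) (hxI.1.trans hxI.2))

end Farey

lemma cfp_mul_cfq_sub_cfp_mul_cfq (x : ℝ) (m : ℕ) :
    (cfp x m * cfq x (m + 1) - cfp x (m + 1) * cfq x m : ℤ) = (-1) ^ m := by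
  induction m with
  | zero => simp [cfp, cfq]
  | succ m ih =>
    rw [pow_succ, ← ih, cfp, cfq]
    push_cast
    ring

lemma cfp_succ_mul_cfq_add_one_of_even (x : ℝ) {m : ℕ} (hm : Even m) :
    cfp x (m + 1) * cfq x m + 1 = cfp x m * cfq x (m + 1) := by
  have hdet := cfp_mul_cfq_sub_cfp_mul_cfq x m
  rw [hm.neg_one_pow] at hdet
  zify
  linarith

lemma cfp_mul_cfq_succ_add_one_of_odd (x : ℝ) {m : ℕ} (hm : Odd m) :
    cfp x m * cfq x (m + 1) + 1 = cfp x (m + 1) * cfq x m := by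
  have hdet := cfp_mul_cfq_sub_cfp_mul_cfq x m
  rw [hm.neg_one_pow] at hdet
  zify
  linarith

lemma mediant_notMem_cfInterval (x : ℝ) (m : ℕ) :
    ((cfp x (m + 1) + cfp x m : ℕ) / (cfq x (m + 1) + cfq x m : ℕ) : ℝ) ∉ cfInterval x m := by
  unfold cfInterval
  split_ifs
  · exact right_notMem_Ioo
  · exact left_notMem_Ioo

/-- The `m`-th iterate of `x` under the Gauss map `y ↦ {1 / y}`, that is, the tail
`[0; a_{m+1}, a_{m+2}, …]` of the continued fraction expansion of `x`. -/
def cfTail (x : ℝ) (m : ℕ) : ℝ := (fun y ↦ Int.fract (1 / y))^[m] x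

lemma cfTail_succ (x : ℝ) (m : ℕ) : cfTail x (m + 1) = Int.fract (1 / cfTail x m) :=
  Function.iterate_succ_apply' _ m x

section ContinuedFraction

variable {x : ℝ}

lemma irrational_cfTail (hirr : Irrational x) (m : ℕ) : Irrational (cfTail x m) := by
  induction m with
  | zero => exact hirr
  | succ m ih =>
    rw [cfTail_succ, Int.fract, one_div]
    exact ih.inv.sub_intCast _

variable (hx : x ∈ Ioo 0 1) (hirr : Irrational x)
include hx hirr

lemma cfTail_mem_Ioo : ∀ m, cfTail x m ∈ Ioo 0 1
  | 0 => hx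
  | m + 1 => by
    have hne := (irrational_cfTail hirr (m + 1)).ne_zero
    rw [cfTail_succ] at hne ⊢
    exact ⟨(Int.fract_nonneg _).lt_of_ne' hne, Int.fract_lt_one _⟩

lemma cfa_pos (m : ℕ) : 0 < cfa x m :=
  have ht := cfTail_mem_Ioo hx hirr m
  Nat.floor_pos.2 ((one_le_div ht.1).2 ht.2.le)

lemma cfTail_mul_cfa_add_cfTail_succ (m : ℕ) :
    cfTail x m * (cfa x m + cfTail x (m + 1)) = 1 := by
  have ht := (cfTail_mem_Ioo hx hirr m).1
  rw [cfTail_succ, cfa, ← cfTail, natCast_floor_eq_intCast_floor (by positivity),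
    Int.floor_add_fract, mul_one_div_cancel ht.ne']

lemma monotone_cfq : Monotone (cfq x) :=
  monotone_nat_of_le_succ fun
    | 0 => Nat.zero_le _
    | m + 1 => Nat.le_add_right_of_le (Nat.le_mul_of_pos_left _ (cfa_pos hx hirr m))

lemma cfq_succ_pos (m : ℕ) : 0 < cfq x (m + 1) :=
  one_pos.trans_le (monotone_cfq hx hirr (Nat.le_add_left 1 m))

lemma cfp_succ_le_cfq_succ : ∀ m, cfp x (m + 1) ≤ cfq x (m + 1)
  | 0 => Nat.zero_le _
  | 1 => by simpa [cfp, cfq] using Nat.succ_le_of_lt (cfa_pos hx hirr 0)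
  | m + 2 => Nat.add_le_add (Nat.mul_le_mul_left _ (cfp_succ_le_cfq_succ (m + 1)))
      (cfp_succ_le_cfq_succ m)

lemma cfp_succ_add_cfp_le : ∀ m, cfp x (m + 1) + cfp x m ≤ cfq x (m + 1) + cfq x m
  | 0 => le_rfl
  | m + 1 => Nat.add_le_add (cfp_succ_le_cfq_succ hx hirr (m + 1)) (cfp_succ_le_cfq_succ hx hirr m)

lemma mul_cfq_add_cfTail_mul_cfq (m : ℕ) :
    x * (cfq x (m + 1) + cfTail x m * cfq x m) = cfp x (m + 1) + cfTail x m * cfp x m := by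
  induction m with
  | zero => simp [cfp, cfq, cfTail]
  | succ m ih =>
    refine mul_left_cancel₀ (cfTail_mem_Ioo hx hirr m).1.ne' ?_
    rw [cfp, cfq]
    push_cast
    linear_combination
      ih + (x * cfq x (m + 1) - cfp x (m + 1)) * cfTail_mul_cfa_add_cfTail_succ hx hirr m

lemma eq_weighted_mediant (m : ℕ) :
    x = (cfp x (m + 1) + cfTail x m * cfp x m) / (cfq x (m + 1) + cfTail x m * cfq x m) := by
  have hq : (0 : ℝ) < cfq x (m + 1) := Nat.cast_pos.2 (cfq_succ_pos hx hirr m)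
  have ht := (cfTail_mem_Ioo hx hirr m).1
  exact (eq_div_iff (by positivity)).2 (mul_cfq_add_cfTail_mul_cfq hx hirr m)

lemma self_mem_cfInterval (m : ℕ) : x ∈ cfInterval x m := by
  obtain ⟨ht₀, ht₁⟩ := cfTail_mem_Ioo hx hirr m
  have hq : (0 : ℝ) < cfq x (m + 1) := Nat.cast_pos.2 (cfq_succ_pos hx hirr m)
  have hxt := eq_weighted_mediant hx hirr m
  unfold cfInterval
  split_ifs with hm
  · have hdet : (cfp x (m + 1) * cfq x m : ℝ) < cfp x m * cfq x (m + 1) :=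
      mod_cast (cfp_succ_mul_cfq_add_one_of_even x hm).le
    have hmono := strictMonoOn_weighted_mediant hq (Nat.cast_nonneg _) hdet
    have hleft := hmono self_mem_Ici ht₀.le ht₀
    have hright := hmono ht₀.le (mem_Ici.2 zero_le_one) ht₁
    simp only [zero_mul, add_zero, one_mul, ← hxt] at hleft hright
    exact ⟨hleft, mod_cast hright⟩
  · have hdet : (cfp x m * cfq x (m + 1) : ℝ) < cfp x (m + 1) * cfq x m :=
      mod_cast (cfp_mul_cfq_succ_add_one_of_odd x (Nat.not_even_iff_odd.1 hm)).le
    have hanti := strictAntiOn_weighted_mediant hq (Nat.cast_nonneg _) hdet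
    have hright := hanti self_mem_Ici ht₀.le ht₀
    have hleft := hanti ht₀.le (mem_Ici.2 zero_le_one) ht₁
    simp only [zero_mul, add_zero, one_mul, ← hxt] at hleft hright
    exact ⟨mod_cast hleft, hright⟩

lemma fareyInterval_subset_cfInterval {n m : ℕ} (hn : cfq x (m + 1) + cfq x m ≤ n + 1) :
    fareyInterval n x ⊆ cfInterval x m := by
  have hq := cfq_succ_pos hx hirr m
  have hconv : (cfp x (m + 1) / cfq x (m + 1) : ℝ) ∈ fareyPts n :=
    div_mem_fareyPts hq (by omega) (cfp_succ_le_cfq_succ hx hirr m)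
  have hmed : ((cfp x (m + 1) + cfp x m : ℕ) / (cfq x (m + 1) + cfq x m : ℕ) : ℝ) ∈ fareyPts n :=
    div_mem_fareyPts (by omega) hn (cfp_succ_add_cfp_le hx hirr m)
  have hmem := self_mem_cfInterval hx hirr m
  unfold cfInterval at hmem ⊢
  split_ifs at hmem ⊢
  · exact fareyInterval_subset_Ioo hconv hmed hmem
  · exact fareyInterval_subset_Ioo hmed hconv hmem

lemma convergent_mediant_mem_fareyInterval {n m : ℕ} (hn : n + 1 < cfq x (m + 1) + cfq x m) :
    ((cfp x (m + 1) + cfp x m : ℕ) / (cfq x (m + 1) + cfq x m : ℕ) : ℝ) ∈ fareyInterval n x := by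
  have hQ := cfq_succ_pos hx hirr m
  have hq : 0 < cfq x m := by
    rcases m with _ | m
    · simp [cfq] at hn
    · exact cfq_succ_pos hx hirr m
  have hQ' : (0 : ℝ) < cfq x (m + 1) := Nat.cast_pos.2 hQ
  have hq' : (0 : ℝ) < cfq x m := Nat.cast_pos.2 hq
  have hmem := self_mem_cfInterval hx hirr m
  unfold cfInterval at hmem
  split_ifs at hmem with hm
  · have hdet := cfp_succ_mul_cfq_add_one_of_even x hm
    have hlt : (cfp x (m + 1) / cfq x (m + 1) : ℝ) < cfp x m / cfq x m :=
      (div_lt_div_iff₀ hQ' hq').2 (mod_cast hdet.le)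
    exact mediant_mem_fareyInterval hQ hq hdet hn hx
      ⟨hmem.1, hmem.2.trans (mod_cast (mediant_mem_Ioo hQ' hq' hlt).2)⟩
  · have hdet := cfp_mul_cfq_succ_add_one_of_odd x (Nat.not_even_iff_odd.1 hm)
    have hlt : (cfp x m / cfq x m : ℝ) < cfp x (m + 1) / cfq x (m + 1) :=
      (div_lt_div_iff₀ hq' hQ').2 (mod_cast hdet.le)
    rw [add_comm (cfq x _)] at hn
    rw [add_comm (cfp x _), add_comm (cfq x _)] at hmem ⊢
    exact mediant_mem_fareyInterval hq hQ hdet hn hx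
      ⟨lt_trans (mod_cast (mediant_mem_Ioo hq' hQ' hlt).1) hmem.1, hmem.2⟩

theorem fareyInterval_subset_cfInterval_iff {n m : ℕ} :
    fareyInterval n x ⊆ cfInterval x m ↔ cfq x (m + 1) + cfq x m ≤ n + 1 := by
  refine ⟨fun hsub ↦ ?_, fareyInterval_subset_cfInterval hx hirr⟩
  by_contra! hn
  exact mediant_notMem_cfInterval x m (hsub (convergent_mediant_mem_fareyInterval hx hirr hn))

end ContinuedFraction

/-- The Lochs index from the Farey to the continued fraction sequence of partitions:
if `q_k + q_{k-1} ≤ n + 1 < q_{k+1} + q_k`, then `L_n(x, ℱ, 𝒞ℱ) = k`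
(with `q_k = cfq x (k+1)`, `q_{k-1} = cfq x k`, `q_{k+1} = cfq x (k+2)`). -/
theorem lochsFtoCF_eq (x : ℝ) (hx : x ∈ Set.Ioo (0 : ℝ) 1) (hirr : Irrational x)
    (n k : ℕ) (hn : 1 ≤ n) (hk : 1 ≤ k)
    (h1 : cfq x (k + 1) + cfq x k ≤ n + 1)
    (h2 : n + 1 < cfq x (k + 2) + cfq x (k + 1)) :
    lochsFtoCF x n = k := by
  refine IsGreatest.csSup_eq ⟨(fareyInterval_subset_cfInterval_iff hx hirr).2 h1, fun l hl ↦ ?_⟩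
  by_contra! hkl
  have hmono := monotone_cfq hx hirr
  have hsum : cfq x (k + 2) + cfq x (k + 1) ≤ cfq x (l + 1) + cfq x l :=
    add_le_add (hmono (by omega)) (hmono hkl)
  exact (h2.trans_le hsum).not_ge ((fareyInterval_subset_cfInterval_iff hx hirr).1 hl)
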